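/- Let 2/3 < γ ≤ 1, m = (4−3γ)/2, β = (1−V²)^((2−γ)/2)/G₊, and define R₁ = β·Ω/(σ₁^m · (1−mΣ₊)^(2(1−m))). Along any solution of the reduced tilted Bianchi type VIII system with Ω > 0, V² < 1, σ₁ > 0, η ≥ 0 and 1−mΣ₊ > 0 for all τ, R₁ is differentiable and satisfies R₁' = (2/(1−mΣ₊))·[(Σ₊−m)² + 3(1−γ)(1−m)η + m(1−m)(2−m)·v₂²·Ω/G₊]·R₁; in particular R₁ is monotonically non-decreasing. -/

import Mathlib

noncomputable section

/-- State of the reduced tilted Bianchi type VIII system: real variables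
`Sp` (= Σ₊), `σ1`, `η`, `M`, `Om` (= Ω), `v1`, `v2`, functions of τ. -/
structure ReducedVIII (γ : ℝ) (I : Set ℝ) where
  Sp : ℝ → ℝ
  σ1 : ℝ → ℝ
  η : ℝ → ℝ
  M : ℝ → ℝ
  Om : ℝ → ℝ
  v1 : ℝ → ℝ
  v2 : ℝ → ℝ

namespace ReducedVIII

variable {γ : ℝ} {I : Set ℝ}

/-- V² = v₁² + v₂² -/
def V2 (S : ReducedVIII γ I) (τ : ℝ) : ℝ := S.v1 τ ^ 2 + S.v2 τ ^ 2

/-- G₊ = 1 + (γ−1)V² -/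
def Gp (S : ReducedVIII γ I) (τ : ℝ) : ℝ := 1 + (γ - 1) * S.V2 τ

/-- Q = 2Σ₊² + σ₁ + (1/2)((3γ−2)+(2−γ)V²)Ω/G₊ -/
def Q (S : ReducedVIII γ I) (τ : ℝ) : ℝ :=
  2 * S.Sp τ ^ 2 + S.σ1 τ + (1/2) * ((3*γ - 2) + (2 - γ) * S.V2 τ) * S.Om τ / S.Gp τ

/-- W = V²𝒮 = (−2v₁² + v₂²)Σ₊ -/
def W (S : ReducedVIII γ I) (τ : ℝ) : ℝ := (-2 * S.v1 τ ^ 2 + S.v2 τ ^ 2) * S.Sp τ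

/-- T = ((3γ−4)(1−V²) + (2−γ)W)/(1−(γ−1)V²) -/
def T (S : ReducedVIII γ I) (τ : ℝ) : ℝ :=
  ((3*γ - 4) * (1 - S.V2 τ) + (2 - γ) * S.W τ) / (1 - (γ - 1) * S.V2 τ)

/-- The evolution equations and the constraint of the reduced system, holding
at each τ in the interval `I`. -/
structure IsSolution (S : ReducedVIII γ I) : Prop where
  hSp : ∀ τ ∈ I, HasDerivAt S.Sp
    ((S.Q τ - 2) * S.Sp τ + S.η τ - S.σ1 τ
      + γ * S.Om τ / (2 * S.Gp τ) * (-2 * S.v1 τ ^ 2 + S.v2 τ ^ 2)) τ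
  hσ1 : ∀ τ ∈ I, HasDerivAt S.σ1 (2 * (S.Q τ + S.Sp τ - 1) * S.σ1 τ) τ
  hη : ∀ τ ∈ I, HasDerivAt S.η (2 * (S.Q τ - S.Sp τ) * S.η τ) τ
  hM : ∀ τ ∈ I, HasDerivAt S.M (-(S.Q τ + 2 * S.Sp τ) * S.M τ) τ
  hOm : ∀ τ ∈ I, HasDerivAt S.Om
    (S.Om τ / S.Gp τ * (2 * S.Q τ - (3*γ - 2)
      + (2 * S.Q τ * (γ - 1) - (2 - γ)) * S.V2 τ - γ * S.W τ)) τ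
  hv1 : ∀ τ ∈ I, HasDerivAt S.v1 ((S.T τ + 2 * S.Sp τ) * S.v1 τ) τ
  hv2 : ∀ τ ∈ I, HasDerivAt S.v2 ((S.T τ - S.Sp τ) * S.v2 τ) τ
  hC : ∀ τ ∈ I, 1 = S.Sp τ ^ 2 + S.σ1 τ + S.η τ + S.Om τ

end ReducedVIII

/-- R₁ = β·Ω/(σ₁^m · (1−mΣ₊)^(2(1−m))), with m = (4−3γ)/2 and
β = (1−V²)^((2−γ)/2)/G₊. -/
noncomputable def R1 {γ : ℝ} {I : Set ℝ} (S : ReducedVIII γ I) (τ : ℝ) : ℝ :=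
  (1 - S.V2 τ) ^ ((2 - γ)/2) / S.Gp τ * S.Om τ /
    (S.σ1 τ ^ ((4 - 3*γ)/2) * (1 - (4 - 3*γ)/2 * S.Sp τ) ^ (2 * (1 - (4 - 3*γ)/2)))

/-!
Every factor of `R₁` obeys `f' = l f`, so the rate of `R₁` is the matching combination of the
rates `l`. The tilt disappears from the product `βΩ`, whose rate is `2Q - (3γ - 2)`. In the
remaining combination the exponent `2(1 - m)` is the one for which the terms in `QΣ₊` cancel, so
that `(1 - mΣ₊) R₁'/R₁` is affine in `Q`; eliminating `σ₁` by the constraint then completes the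
square `(Σ₊ - m)²` and leaves terms which are nonnegative for `2/3 ≤ γ ≤ 1`.
-/

/-- `f` has logarithmic derivative `l` at `x`, in the form `f' = l f`, which is how the
evolution equations are written. No division occurs, so `f x = 0` is allowed. -/
def HasLogDerivAt {𝕜 : Type*} [NontriviallyNormedField 𝕜] (f : 𝕜 → 𝕜) (l x : 𝕜) : Prop :=
  HasDerivAt f (l * f x) x

namespace HasLogDerivAt

section NormedField

variable {𝕜 : Type*} [NontriviallyNormedField 𝕜] {f g : 𝕜 → 𝕜} {f' l k x : 𝕜}

theorem of_hasDerivAt (hf : HasDerivAt f f' x) (hx : f x ≠ 0) :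
    HasLogDerivAt f (f' / f x) x :=
  hf.congr_deriv (div_mul_cancel₀ f' hx).symm

theorem congr_logDeriv (hf : HasLogDerivAt f l x) (hlk : l = k) : HasLogDerivAt f k x :=
  hlk ▸ hf

theorem mul (hf : HasLogDerivAt f l x) (hg : HasLogDerivAt g k x) :
    HasLogDerivAt (fun t => f t * g t) (l + k) x :=
  (HasDerivAt.mul hf hg).congr_deriv (by ring)

theorem div (hf : HasLogDerivAt f l x) (hg : HasLogDerivAt g k x) (hx : g x ≠ 0) :
    HasLogDerivAt (fun t => f t / g t) (l - k) x :=
  (HasDerivAt.div hf hg hx).congr_deriv (by field_simp)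

end NormedField

variable {f l : ℝ → ℝ} {c x : ℝ} {s : Set ℝ}

theorem rpow_const (p : ℝ) (hf : HasLogDerivAt f c x) (hx : 0 < f x) :
    HasLogDerivAt (fun t => f t ^ p) (p * c) x := by
  refine (HasDerivAt.rpow_const (p := p) hf (Or.inl hx.ne')).congr_deriv ?_
  rw [Real.rpow_sub_one hx.ne']
  field_simp

theorem monotoneOn (hs : Convex ℝ s) (hf : ∀ x ∈ s, HasLogDerivAt f (l x) x)
    (hl : ∀ x ∈ s, 0 ≤ l x) (hf₀ : ∀ x ∈ s, 0 ≤ f x) : MonotoneOn f s :=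
  monotoneOn_of_hasDerivWithinAt_nonneg hs
    (fun x hx => (hf x hx).continuousAt.continuousWithinAt)
    (fun x hx => (hf x (interior_subset hx)).hasDerivWithinAt)
    (fun x hx => mul_nonneg (hl x (interior_subset hx)) (hf₀ x (interior_subset hx)))

end HasLogDerivAt

namespace ReducedVIII

/-- The exponent `m = (4 - 3γ)/2` of the paper; it lies in `[1/2, 1]` for `2/3 ≤ γ ≤ 1`. -/
abbrev m (γ : ℝ) : ℝ := (4 - 3 * γ) / 2

variable {γ : ℝ} {I : Set ℝ}

/-- The tilt factor `β = (1 - V²)^((2-γ)/2) / G₊` of `R₁`. -/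
def beta (S : ReducedVIII γ I) (τ : ℝ) : ℝ := (1 - S.V2 τ) ^ ((2 - γ) / 2) / S.Gp τ

/-- The logarithmic derivative of `R₁` along solutions. -/
def R1Rate (S : ReducedVIII γ I) (τ : ℝ) : ℝ :=
  2 / (1 - m γ * S.Sp τ)
    * ((S.Sp τ - m γ) ^ 2
      + 3 * (1 - γ) * (1 - m γ) * S.η τ
      + m γ * (1 - m γ) * (2 - m γ) * S.v2 τ ^ 2 * S.Om τ / S.Gp τ)

variable {S : ReducedVIII γ I} {τ : ℝ}

theorem V2_nonneg : 0 ≤ S.V2 τ :=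
  add_nonneg (sq_nonneg _) (sq_nonneg _)

theorem Gp_pos (hγ : 0 ≤ γ) (hV : S.V2 τ < 1) : 0 < S.Gp τ := by
  unfold Gp
  linarith [mul_nonneg hγ (V2_nonneg (S := S) (τ := τ))]

theorem one_sub_mul_V2_pos (hγ : γ ≤ 2) (hV : S.V2 τ < 1) : 0 < 1 - (γ - 1) * S.V2 τ := by
  linarith [mul_nonneg (sub_nonneg.2 hγ) (V2_nonneg (S := S) (τ := τ))]

theorem T_mul_V2_sub_W (hD : 1 - (γ - 1) * S.V2 τ ≠ 0) :
    S.T τ * S.V2 τ - S.W τ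
      = ((3 * γ - 4) * S.V2 τ - S.W τ) / (1 - (γ - 1) * S.V2 τ) * (1 - S.V2 τ) := by
  have hT : S.T τ * (1 - (γ - 1) * S.V2 τ) = (3 * γ - 4) * (1 - S.V2 τ) + (2 - γ) * S.W τ :=
    div_mul_cancel₀ _ hD
  rw [div_mul_eq_mul_div, eq_div_iff hD]
  linear_combination S.V2 τ * hT

theorem R1Rate_nonneg (hγ₁ : 2 / 3 ≤ γ) (hγ₂ : γ ≤ 1) (hOm : 0 ≤ S.Om τ) (hG : 0 ≤ S.Gp τ)
    (hη : 0 ≤ S.η τ) (hmSig : 0 ≤ 1 - m γ * S.Sp τ) : 0 ≤ S.R1Rate τ := by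
  have hm₀ : 0 ≤ m γ := by unfold m; linarith
  have hm₁ : 0 ≤ 1 - m γ := by unfold m; linarith
  have hm₂ : 0 ≤ 2 - m γ := by linarith
  have : 0 ≤ 1 - γ := sub_nonneg.2 hγ₂
  unfold R1Rate
  positivity

theorem R1_nonneg (hV : S.V2 τ ≤ 1) (hG : 0 ≤ S.Gp τ) (hOm : 0 ≤ S.Om τ) (hσ : 0 ≤ S.σ1 τ)
    (hmSig : 0 ≤ 1 - m γ * S.Sp τ) : 0 ≤ R1 S τ := by
  unfold R1
  have : 0 ≤ 1 - S.V2 τ := sub_nonneg.2 hV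
  positivity

theorem sub_weighted_rates_eq {c p q e s F : ℝ} (hc : 1 - c * p ≠ 0) :
    2 * q - 2 * (1 - c) - (c * (2 * (q + p - 1))
      + 2 * (1 - c) * (-(c * ((q - 2) * p + e - s + F)) / (1 - c * p)))
    = 2 / (1 - c * p) * ((1 - c) * q + (2 * c - 1 - c * p) * (1 - c * p)
      + c * (1 - c) * (e - s - 2 * p + F)) := by
  -- Over the common denominator the terms in `q * p` are `-2c(1 - c)` and `2c(1 - c)`.
  field_simp
  ring

theorem R1Rate_eq_of_constraint (hC : 1 = S.Sp τ ^ 2 + S.σ1 τ + S.η τ + S.Om τ)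
    (hG : S.Gp τ ≠ 0) :
    S.R1Rate τ = 2 / (1 - m γ * S.Sp τ)
      * ((1 - m γ) * S.Q τ + (2 * m γ - 1 - m γ * S.Sp τ) * (1 - m γ * S.Sp τ)
        + m γ * (1 - m γ) * (S.η τ - S.σ1 τ - 2 * S.Sp τ
          + γ * S.Om τ / (2 * S.Gp τ) * (-2 * S.v1 τ ^ 2 + S.v2 τ ^ 2))) := by
  have hσ : S.σ1 τ = 1 - S.Sp τ ^ 2 - S.η τ - S.Om τ := by linarith
  unfold R1Rate Q
  congr 1
  rw [hσ]
  field_simp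
  unfold Gp V2
  ring

namespace IsSolution

theorem hasDerivAt_V2 (h : S.IsSolution) (hτ : τ ∈ I) :
    HasDerivAt S.V2 (2 * (S.T τ * S.V2 τ - S.W τ)) τ := by
  refine (((h.hv1 τ hτ).pow 2).add ((h.hv2 τ hτ).pow 2)).congr_deriv ?_
  unfold V2 W
  push_cast
  ring

theorem hasLogDerivAt_one_sub_V2 (h : S.IsSolution) (hτ : τ ∈ I)
    (hD : 1 - (γ - 1) * S.V2 τ ≠ 0) :
    HasLogDerivAt (fun t => 1 - S.V2 t)
      (-2 * ((3 * γ - 4) * S.V2 τ - S.W τ) / (1 - (γ - 1) * S.V2 τ)) τ := by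
  refine ((h.hasDerivAt_V2 hτ).const_sub 1).congr_deriv ?_
  rw [T_mul_V2_sub_W hD]
  ring

theorem hasLogDerivAt_Gp (h : S.IsSolution) (hτ : τ ∈ I) (hG : S.Gp τ ≠ 0) :
    HasLogDerivAt S.Gp ((γ - 1) * (2 * (S.T τ * S.V2 τ - S.W τ)) / S.Gp τ) τ :=
  .of_hasDerivAt (((h.hasDerivAt_V2 hτ).const_mul (γ - 1)).const_add 1) hG

theorem hasLogDerivAt_beta (h : S.IsSolution) (hτ : τ ∈ I) (hV : S.V2 τ < 1)
    (hG : S.Gp τ ≠ 0) (hD : 1 - (γ - 1) * S.V2 τ ≠ 0) :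
    HasLogDerivAt S.beta (-γ * ((3 * γ - 4) * S.V2 τ - S.W τ) / S.Gp τ) τ := by
  have tilt_identity : (2 - γ) * S.Gp τ + 2 * (γ - 1) * (1 - S.V2 τ)
      = γ * (1 - (γ - 1) * S.V2 τ) := by
    unfold Gp
    ring
  refine (((h.hasLogDerivAt_one_sub_V2 hτ hD).rpow_const ((2 - γ) / 2) (sub_pos.2 hV)).div
    (h.hasLogDerivAt_Gp hτ hG) hG).congr_logDeriv ?_
  rw [T_mul_V2_sub_W hD]
  generalize 1 - (γ - 1) * S.V2 τ = D at hD tilt_identity ⊢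
  field_simp
  linear_combination -((3 * γ - 4) * S.V2 τ - S.W τ) * tilt_identity

theorem hasLogDerivAt_Om (h : S.IsSolution) (hτ : τ ∈ I) :
    HasLogDerivAt S.Om ((2 * S.Q τ - (3 * γ - 2)
      + (2 * S.Q τ * (γ - 1) - (2 - γ)) * S.V2 τ - γ * S.W τ) / S.Gp τ) τ :=
  (h.hOm τ hτ).congr_deriv (by ring)

theorem hasLogDerivAt_beta_mul_Om (h : S.IsSolution) (hτ : τ ∈ I) (hV : S.V2 τ < 1)
    (hG : S.Gp τ ≠ 0) (hD : 1 - (γ - 1) * S.V2 τ ≠ 0) :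
    HasLogDerivAt (fun t => S.beta t * S.Om t) (2 * S.Q τ - (3 * γ - 2)) τ := by
  refine ((h.hasLogDerivAt_beta hτ hV hG hD).mul (h.hasLogDerivAt_Om hτ)).congr_logDeriv ?_
  field_simp
  unfold Gp
  ring

theorem hasLogDerivAt_one_sub_mul_Sp (h : S.IsSolution) (hτ : τ ∈ I) {c : ℝ}
    (hc : 1 - c * S.Sp τ ≠ 0) :
    HasLogDerivAt (fun t => 1 - c * S.Sp t)
      (-(c * ((S.Q τ - 2) * S.Sp τ + S.η τ - S.σ1 τ
        + γ * S.Om τ / (2 * S.Gp τ) * (-2 * S.v1 τ ^ 2 + S.v2 τ ^ 2))) / (1 - c * S.Sp τ)) τ :=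
  .of_hasDerivAt (((h.hSp τ hτ).const_mul c).const_sub 1) hc

theorem hasLogDerivAt_R1 (h : S.IsSolution) (hτ : τ ∈ I) (hV : S.V2 τ < 1)
    (hG : S.Gp τ ≠ 0) (hD : 1 - (γ - 1) * S.V2 τ ≠ 0) (hσ : 0 < S.σ1 τ)
    (hmSig : 0 < 1 - m γ * S.Sp τ) :
    HasLogDerivAt (R1 S) (S.R1Rate τ) τ := by
  have h_num := h.hasLogDerivAt_beta_mul_Om hτ hV hG hD
  have h_den := (HasLogDerivAt.rpow_const (m γ) (h.hσ1 τ hτ) hσ).mul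
    ((h.hasLogDerivAt_one_sub_mul_Sp hτ hmSig.ne').rpow_const (2 * (1 - m γ)) hmSig)
  have h_den_ne : S.σ1 τ ^ m γ * (1 - m γ * S.Sp τ) ^ (2 * (1 - m γ)) ≠ 0 := by positivity
  have hγ : 3 * γ - 2 = 2 * (1 - m γ) := by unfold m; ring
  refine (h_num.div h_den h_den_ne).congr_logDeriv ?_
  rw [hγ, sub_weighted_rates_eq hmSig.ne', R1Rate_eq_of_constraint (h.hC τ hτ) hG]

end IsSolution

end ReducedVIII

open ReducedVIII in
theorem reducedVIII_R1_monotone_general {γ : ℝ} (hγ₀ : 0 ≤ γ) (hγ₂ : γ ≤ 2) {I : Set ℝ}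
    {S : ReducedVIII γ I} (hsol : S.IsSolution)
    (hV : ∀ τ ∈ I, S.V2 τ < 1) (hσ : ∀ τ ∈ I, 0 < S.σ1 τ)
    (hmSig : ∀ τ ∈ I, 0 < 1 - m γ * S.Sp τ) :
    (∀ τ ∈ I, HasDerivAt (R1 S) (S.R1Rate τ * R1 S τ) τ) ∧
    (2 / 3 ≤ γ → γ ≤ 1 → Convex ℝ I → (∀ τ ∈ I, 0 ≤ S.Om τ) → (∀ τ ∈ I, 0 ≤ S.η τ) →
      MonotoneOn (R1 S) I) := by
  have hG : ∀ τ ∈ I, 0 < S.Gp τ := fun τ hτ => Gp_pos hγ₀ (hV τ hτ)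
  have hR1 : ∀ τ ∈ I, HasLogDerivAt (R1 S) (S.R1Rate τ) τ := fun τ hτ =>
    hsol.hasLogDerivAt_R1 hτ (hV τ hτ) (hG τ hτ).ne' (one_sub_mul_V2_pos hγ₂ (hV τ hτ)).ne'
      (hσ τ hτ) (hmSig τ hτ)
  refine ⟨hR1, fun hγ hγ₁ hI hOm hη => HasLogDerivAt.monotoneOn hI hR1 ?_ ?_⟩
  · exact fun τ hτ =>
      R1Rate_nonneg hγ hγ₁ (hOm τ hτ) (hG τ hτ).le (hη τ hτ) (hmSig τ hτ).le
  · exact fun τ hτ =>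
      R1_nonneg (hV τ hτ).le (hG τ hτ).le (hOm τ hτ) (hσ τ hτ).le (hmSig τ hτ).le

/-- For 2/3 < γ ≤ 1 and m = (4−3γ)/2, along any solution of the
reduced system with Ω > 0, V² < 1, σ₁ > 0, η ≥ 0 and 1−mΣ₊ > 0, R₁ is
differentiable with
R₁' = (2/(1−mΣ₊))·[(Σ₊−m)² + 3(1−γ)(1−m)η + m(1−m)(2−m)v₂²Ω/G₊]·R₁;
in particular R₁ is monotonically non-decreasing. -/
theorem reducedVIII_R1_monotone (γ : ℝ) (hγ1 : 2/3 < γ) (hγ2 : γ ≤ 1)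
    (τ₀ : ℝ) (S : ReducedVIII γ (Set.Ici τ₀)) (hsol : S.IsSolution)
    (hOm : ∀ τ ∈ Set.Ici τ₀, 0 < S.Om τ)
    (hV : ∀ τ ∈ Set.Ici τ₀, S.V2 τ < 1)
    (hσ : ∀ τ ∈ Set.Ici τ₀, 0 < S.σ1 τ)
    (hη : ∀ τ ∈ Set.Ici τ₀, 0 ≤ S.η τ)
    (hmSig : ∀ τ ∈ Set.Ici τ₀, 0 < 1 - (4 - 3*γ)/2 * S.Sp τ) :
    (∀ τ ∈ Set.Ici τ₀, HasDerivAt (R1 S)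
      (2 / (1 - (4 - 3*γ)/2 * S.Sp τ)
        * ((S.Sp τ - (4 - 3*γ)/2) ^ 2
          + 3 * (1 - γ) * (1 - (4 - 3*γ)/2) * S.η τ
          + (4 - 3*γ)/2 * (1 - (4 - 3*γ)/2) * (2 - (4 - 3*γ)/2)
            * S.v2 τ ^ 2 * S.Om τ / S.Gp τ)
        * R1 S τ) τ) ∧
    MonotoneOn (R1 S) (Set.Ici τ₀) := by
  have h := reducedVIII_R1_monotone_general (by linarith) (by linarith) hsol hV hσ hmSig
  exact ⟨h.1, h.2 hγ1.le hγ2 (convex_Ici τ₀) (fun τ hτ => (hOm τ hτ).le) hη⟩
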